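/- The damping coefficients solve the EDDI linear system (Eq. 5): In the unforced case F ≡ 0 with V(0) = 0, suppose the non-conservative force is a linear combination of M continuous candidate functions, d(t) = Σ_{j=1}^{M} bⱼ·Bⱼ(t), and let 0 ≤ γ₀ ≤ γ₁ ≤ … ≤ γ_N be times with x(γᵢ) = 0 for all i. Define the N×M matrix Q by Q_{ij} = ∫_{γ₀}^{γᵢ} x'(τ)·Bⱼ(τ) dτ and the vector R by Rᵢ = T(γ₀) − T(γᵢ). Then the coefficient vector b = (b₁,…,b_M) satisfies Q·b = R. -/

import Mathlib

open MeasureTheory intervalIntegral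

/-- Energy balance for an unforced oscillator: the work done against the non-conservative force
over `[a, c]` equals the loss of mechanical energy. -/
theorem integral_velocity_mul_damping_eq_energy_loss
    {m a c : ℝ} {x d V : ℝ → ℝ} (hx : ContDiff ℝ 2 x) (hd : Continuous d)
    (hV : Differentiable ℝ V) (hac : a ≤ c)
    (heom : ∀ t ∈ Set.Icc a c, m * deriv (deriv x) t + d t + deriv V (x t) = 0) :
    ∫ τ in a..c, deriv x τ * d τ =
      (1 / 2 * m * deriv x a ^ 2 + V (x a)) - (1 / 2 * m * deriv x c ^ 2 + V (x c)) := by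
  have hx' : ContDiff ℝ 1 (deriv x) := ContDiff.deriv' hx
  have hderiv : ∀ t ∈ Set.uIcc a c,
      HasDerivAt (fun t => -(1 / 2 * m * deriv x t ^ 2 + V (x t))) (deriv x t * d t) t := by
    intro t ht
    rw [Set.uIcc_of_le hac] at ht
    have hpos : HasDerivAt x (deriv x t) t := (hx.differentiable (by norm_num) t).hasDerivAt
    have hvel : HasDerivAt (deriv x) (deriv (deriv x) t) t :=
      (hx'.differentiable (by norm_num) t).hasDerivAt
    have hpot : HasDerivAt (fun t => V (x t)) (deriv V (x t) * deriv x t) t :=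
      (hV (x t)).hasDerivAt.comp t hpos
    refine (((hvel.pow 2).const_mul (1 / 2 * m)).add hpot).neg.congr_deriv ?_
    push_cast
    linear_combination (-deriv x t) * heom t ht
  rw [integral_eq_sub_of_hasDerivAt hderiv
    ((hx'.continuous.mul hd).intervalIntegrable a c)]
  ring

/-- The damping coefficients solve the EDDI linear system (Eq. 5):
with `d(t) = Σⱼ bⱼ·Bⱼ(t)` and displacement zeros `γ₀ ≤ γ₁ ≤ … ≤ γ_N`,
the matrix `Q` of dissipation integrals and the vector `R` of kinetic-energy
drops satisfy `Q·b = R`. -/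
theorem eddi_linear_system
    (m : ℝ) (hm : 0 < m)
    (x : ℝ → ℝ) (hx : ContDiff ℝ 2 x)
    (d : ℝ → ℝ) (hd : Continuous d)
    (V : ℝ → ℝ) (hV : Differentiable ℝ V) (hV' : Continuous (deriv V))
    (F : ℝ → ℝ) (hF : Continuous F)
    (heom : ∀ t ≥ (0 : ℝ), m * deriv (deriv x) t + d t + deriv V (x t) = F t)
    (hF0 : ∀ t, F t = 0) (hV0 : V 0 = 0)
    (T : ℝ → ℝ)
    (hT : ∀ t, T t = 1 / 2 * m * (deriv x t) ^ 2)
    (M N : ℕ)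
    (B : Fin M → ℝ → ℝ) (hB : ∀ j, Continuous (B j))
    (b : Fin M → ℝ)
    (hdform : ∀ t, d t = ∑ j : Fin M, b j * B j t)
    (γ : Fin (N + 1) → ℝ) (hγ0 : 0 ≤ γ 0) (hγmono : Monotone γ)
    (hγzero : ∀ i, x (γ i) = 0)
    (Q : Matrix (Fin N) (Fin M) ℝ)
    (hQ : ∀ i j, Q i j = ∫ τ in (γ 0)..(γ i.succ), deriv x τ * B j τ)
    (R : Fin N → ℝ)
    (hR : ∀ i, R i = T (γ 0) - T (γ i.succ)) :
    Q.mulVec b = R := by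
  funext i
  have hle : γ 0 ≤ γ i.succ := hγmono (Fin.zero_le _)
  have hbalance := integral_velocity_mul_damping_eq_energy_loss (m := m) hx hd hV hle
    (fun t ht => (heom t (hγ0.trans ht.1)).trans (hF0 t))
  have hexpand : ∫ τ in (γ 0)..(γ i.succ), deriv x τ * d τ = ∑ j, Q i j * b j := by
    have hx' : Continuous (deriv x) := hx.continuous_deriv (by norm_num)
    simp_rw [hQ, ← intervalIntegral.integral_mul_const]
    rw [← intervalIntegral.integral_finsetSum (f := fun j τ => deriv x τ * B j τ * b j) fun j _ =>
      ((hx'.mul (hB j)).mul continuous_const).intervalIntegrable _ _]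
    refine intervalIntegral.integral_congr fun τ _ => ?_
    simp only [hdform, Finset.mul_sum]
    exact Finset.sum_congr rfl fun j _ => by ring
  rw [hγzero, hγzero, hexpand] at hbalance
  rw [hR, hT, hT]
  simp only [Matrix.mulVec, dotProduct]
  linarith
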